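/- Let (W, S) be a Coxeter system whose Coxeter graph is bipartite and which has Property F. Let w ∈ W_c be such that 𝓛(w) = 𝓡(w) and |𝓛(w)| = n(w). Then ℓ(w) ≡ n(w) (mod 2). -/

import Mathlib

open CoxeterSystem

variable {B W : Type*} [Group W] {M : CoxeterMatrix B} (cs : CoxeterSystem M W)

/-- `m(s,t) ≥ 3`: `s` and `t` are distinct noncommuting generators
(`M s t = 0` encodes `m(s,t) = ∞`). -/
def Noncomm (M : CoxeterMatrix B) (s t : B) : Prop := M s t = 0 ∨ 3 ≤ M s t

/-- The longest element `w_{st}` of the rank-2 parabolic subgroup `⟨s,t⟩`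
(meaningful when `3 ≤ M s t < ∞`). -/
def longest (s t : B) : W := cs.wordProd (alternatingWord s t (M s t))

/-- `w` is complex: it admits a reduced factorization `x₁ · w_{st} · x₂` where `w_{st}`
is the longest element of a rank-2 parabolic subgroup `⟨s,t⟩` with `3 ≤ m(s,t) < ∞`. -/
def IsComplex (w : W) : Prop :=
  ∃ s t : B, 3 ≤ M s t ∧ ∃ x₁ x₂ : W,
    w = x₁ * longest cs s t * x₂ ∧
    cs.length w = cs.length x₁ + cs.length (longest cs s t : W) + cs.length x₂

/-- `w` is fully commutative, i.e. `w ∈ W_c`. -/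
def FullyComm (w : W) : Prop := ¬ IsComplex cs w

/-- `x` is weakly complex: `x` is complex and `x = s·u` reduced with `u` fully commutative. -/
def IsWeaklyComplex (x : W) : Prop :=
  IsComplex cs x ∧ ∃ (s : B) (u : W), FullyComm cs u ∧ x = cs.simple s * u ∧
    cs.length x = 1 + cs.length u

/-- The alternating product `t s t s ⋯` with `k` factors, beginning with `t`. -/
def altProd (t s : B) (k : ℕ) : W :=
  cs.wordProd ((List.range k).map (fun i => if i % 2 = 0 then t else s))

/-- The left descent set `𝓛(w)`. -/
def leftDescents (w : W) : Set B := {i | cs.IsLeftDescent w i}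

/-- The right descent set `𝓡(w)`. -/
def rightDescents (w : W) : Set B := {i | cs.IsRightDescent w i}

/-- `w` is a reduced product of distinct pairwise commuting generators. -/
def IsCommProd (w : W) : Prop :=
  ∃ l : List B, l.Nodup ∧ (∀ u ∈ l, ∀ u' ∈ l, u ≠ u' → M u u' = 2) ∧
    cs.IsReduced l ∧ w = cs.wordProd l

/-- `y` is left star reducible to `x` with respect to the pair `{s,t}`:
`x` and `y` lie in the same left `{s,t}`-string and `ℓ(x) = ℓ(y) − 1`. -/
def LeftStarReducible (s t : B) (y x : W) : Prop :=
  Noncomm M s t ∧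
  ((cs.IsLeftDescent y s ∧ ¬ cs.IsLeftDescent y t ∧ x = cs.simple s * y ∧
      cs.IsLeftDescent x t) ∨
   (cs.IsLeftDescent y t ∧ ¬ cs.IsLeftDescent y s ∧ x = cs.simple t * y ∧
      cs.IsLeftDescent x s))

/-- `y` is right star reducible to `x` with respect to the pair `{s,t}`. -/
def RightStarReducible (s t : B) (y x : W) : Prop :=
  Noncomm M s t ∧
  ((cs.IsRightDescent y s ∧ ¬ cs.IsRightDescent y t ∧ x = y * cs.simple s ∧
      cs.IsRightDescent x t) ∨
   (cs.IsRightDescent y t ∧ ¬ cs.IsRightDescent y s ∧ x = y * cs.simple t ∧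
      cs.IsRightDescent x s))

/-- `y` is star reducible to `x`: there is a (possibly empty) chain of left and right
star reductions from `y` to `x`. -/
def StarReducible (y x : W) : Prop :=
  Relation.ReflTransGen
    (fun a b => ∃ s t : B, LeftStarReducible cs s t a b ∨ RightStarReducible cs s t a b) y x

/-- Property F: every fully commutative element is star reducible to a reduced product of
distinct pairwise commuting generators. -/
def PropertyF : Prop := ∀ w : W, FullyComm cs w → ∃ x : W, StarReducible cs w x ∧ IsCommProd cs x

/-- `n(w)`: the maximum `k` such that `w` admits a reduced factorization `w = w₁·w₂·w₃`
with `w₂` a reduced product of `k` distinct pairwise commuting generators. -/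
noncomputable def nval (w : W) : ℕ :=
  sSup {k | ∃ w₁ w₂ w₃ : W, w = w₁ * w₂ * w₃ ∧
    cs.length w = cs.length w₁ + cs.length w₂ + cs.length w₃ ∧
    IsCommProd cs w₂ ∧ cs.length w₂ = k}

/-- The Bruhat order: `x ≤ w` iff some reduced word for `w` has a subword that is a
reduced word for `x`. -/
def BruhatLE (x w : W) : Prop :=
  ∃ l l' : List B, cs.IsReduced l ∧ cs.wordProd l = w ∧
    l'.Sublist l ∧ cs.IsReduced l' ∧ cs.wordProd l' = x

/-- `w = wI · wII` is the coset decomposition of `w` with respect to `I = {s,t}`: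
`wI ∈ W_I`, `𝓛(wII) ∩ I = ∅` and `ℓ(w) = ℓ(wI) + ℓ(wII)`. -/
def CosetDecompL (s t : B) (w wI wII : W) : Prop :=
  w = wI * wII ∧ wI ∈ Subgroup.closure {cs.simple s, cs.simple t} ∧
  ¬ cs.IsLeftDescent wII s ∧ ¬ cs.IsLeftDescent wII t ∧
  cs.length w = cs.length wI + cs.length wII

/-- `w = wII · wI` is the right coset decomposition of `w` with respect to `I = {s,t}`:
`wI ∈ W_I`, `𝓡(wII) ∩ I = ∅` and `ℓ(w) = ℓ(wII) + ℓ(wI)`. -/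
def CosetDecompR (s t : B) (w wII wI : W) : Prop :=
  w = wII * wI ∧ wI ∈ Subgroup.closure {cs.simple s, cs.simple t} ∧
  ¬ cs.IsRightDescent wII s ∧ ¬ cs.IsRightDescent wII t ∧
  cs.length w = cs.length wII + cs.length wI

/-- `k_ε(J) = (−1)^{|J ∩ ε⁻¹(0)|}` for a set `J` of generators. -/
noncomputable def kSet (ε : B → Bool) (J : Set B) : ℤ :=
  (-1) ^ (J ∩ {i | ε i = false}).ncard

/-- `k_ε(w) = k_ε(𝓛(w)) · k_ε(𝓡(w))`. -/
noncomputable def kElt (ε : B → Bool) (w : W) : ℤ :=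
  kSet ε (leftDescents cs w) * kSet ε (rightDescents cs w)

/-!
A star reduction removes an end letter `s` of a heap next to which a noncommuting letter `t`
becomes an end letter. Undoing the star reductions that lead from `w` to a commuting product of
`n` letters therefore builds the heap of `w` by extending, letter by letter, `n` chains whose
consecutive letters do not commute. The left ends of the chains always contain the left descents,
and the right ends the right descents. When `w` has `n(w)` left and `n(w)` right descents, there
is no room for any other end, so the ends of the chains are exactly the descents. A 2-colouring
`ε` of the Coxeter graph alternates along each chain, so the colours of its two ends determine the
parity of its length; taken over all chains this says `k_ε(w) = (-1) ^ (ℓ(w) + n(w))`, whereas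
`k_ε(w) = 1` if `𝓛(w) = 𝓡(w)`.

That distinct generators are distinct elements of `W` is read off the geometric representation,
and the exchange condition comes from Tits' action of `W` on signed reflections.
-/

section GeometricRepresentation

open Module Polynomial.Chebyshev

theorem eval_S_add_eval_S_eq_zero {m : ℕ} (hm : 3 ≤ m) {a b : ℤ} (hab : a + b + 2 = m) :
    (S ℝ a).eval (2 * Real.cos (2 * Real.pi / m)) +
      (S ℝ b).eval (2 * Real.cos (2 * Real.pi / m)) = 0 := by
  have hm' : (3 : ℝ) ≤ m := by exact_mod_cast hm
  set θ := 2 * Real.pi / (m : ℝ) with hθ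
  have hsin : 0 < Real.sin θ := by
    apply Real.sin_pos_of_pos_of_lt_pi
    · positivity
    · rw [hθ, div_lt_iff₀ (by linarith)]
      nlinarith [Real.pi_pos]
  have hangle : ((b : ℝ) + 1) * θ = 2 * Real.pi - (a + 1) * θ := by
    have hab' : (a : ℝ) + b + 2 = m := by exact_mod_cast hab
    have hmθ : m * θ = 2 * Real.pi := mul_div_cancel₀ _ (by linarith)
    linear_combination θ * hab' + hmθ
  refine (mul_eq_zero.mp ?_).resolve_right hsin.ne'
  rw [add_mul, S_two_mul_real_cos, S_two_mul_real_cos, hangle, Real.sin_two_pi_sub, add_neg_cancel]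

section Reflection

variable {V : Type*} [AddCommGroup V]

theorem commute_reflection {R : Type*} [CommRing R] [Module R V] {x y : V} {f g : Dual R V}
    (hf : f x = 2) (hg : g y = 2) (hfy : f y = 0) (hgx : g x = 0) :
    Commute (reflection hf) (reflection hg) := by
  ext v
  simp only [LinearEquiv.mul_apply, reflection_apply, map_sub, map_smul, hfy, hgx]
  module

theorem reflection_mul_reflection_pow_eq_one [Module ℝ V] {x y : V} {f g : Dual ℝ V}
    (hf : f x = 2) (hg : g y = 2) {m : ℕ} (hm : 3 ≤ m)
    (hfg : f y * g x - 2 = 2 * Real.cos (2 * Real.pi / m)) :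
    (reflection hf * reflection hg) ^ m = 1 := by
  ext v
  rw [reflection_mul_reflection_pow_apply hf hg m v _ hfg.symm]
  obtain ⟨k, hk⟩ | ⟨k, hk⟩ := m.even_or_odd
  · have hS := eval_S_add_eval_S_eq_zero hm (show ((k : ℤ) - 1) + (k - 1) + 2 = m by omega)
    rw [show ((m : ℤ) - 2) / 2 = k - 1 by omega, show ((m : ℤ) - 1) / 2 = k - 1 by omega,
      add_self_eq_zero.mp hS]
    simp
  · have hS := eval_S_add_eval_S_eq_zero hm (show (k : ℤ) + (k - 1) + 2 = m by omega)
    rw [show ((m : ℤ) - 2) / 2 = k - 1 by omega, show ((m : ℤ) - 1) / 2 = k by omega,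
      show ((m : ℤ) - 3) / 2 = k - 1 by omega, show (m : ℤ) / 2 = k by omega, hS]
    simp

end Reflection

variable (M)

/-- The entry `-2 cos (π / m)` of the Cartan matrix of the geometric representation, where
`m = M i j`. For `m = ∞`, encoded as `M i j = 0`, it is `-2`. -/
noncomputable def geomCoeff (i j : B) : ℝ :=
  if M i j = 0 then -2 else -2 * Real.cos (Real.pi / M i j)

theorem geomCoeff_self (i : B) : geomCoeff M i i = 2 := by
  simp [geomCoeff]

theorem geomCoeff_comm (i j : B) : geomCoeff M i j = geomCoeff M j i := by
  rw [geomCoeff, geomCoeff, M.symmetric]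

theorem geomCoeff_mul_geomCoeff_sub_two {i j : B} (h : M i j ≠ 0) :
    geomCoeff M i j * geomCoeff M j i - 2 = 2 * Real.cos (2 * Real.pi / M i j) := by
  rw [geomCoeff_comm M j i, geomCoeff, if_neg h, mul_div_assoc, Real.cos_two_mul]
  ring

/-- The simple coroot of `i` in the geometric representation, whose underlying space `B →₀ ℝ` has
the simple roots as its standard basis. -/
noncomputable def simpleCoroot (i : B) : Dual ℝ (B →₀ ℝ) :=
  Finsupp.linearCombination ℝ (geomCoeff M i)

theorem simpleCoroot_single (i j : B) :
    simpleCoroot M i (Finsupp.single j 1) = geomCoeff M i j := by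
  simp [simpleCoroot]

theorem simpleCoroot_single_self (i : B) : simpleCoroot M i (Finsupp.single i 1) = 2 := by
  rw [simpleCoroot_single, geomCoeff_self]

/-- The reflection by which the generator `i` acts in the geometric representation. -/
noncomputable def geomReflection (i : B) : (B →₀ ℝ) ≃ₗ[ℝ] (B →₀ ℝ) :=
  reflection (simpleCoroot_single_self M i)

theorem isLiftable_geomReflection : M.IsLiftable (geomReflection M) := by
  intro i j
  obtain h0 | h1 | h2 | h3 : M i j = 0 ∨ M i j = 1 ∨ M i j = 2 ∨ 3 ≤ M i j := by omega
  · rw [h0, pow_zero]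
  · obtain rfl : i = j := by_contra fun hij => M.off_diagonal i j hij h1
    rw [h1, pow_one]
    ext1 v
    exact involutive_reflection (simpleCoroot_single_self M i) v
  · have hzero : geomCoeff M i j = 0 := by simp [geomCoeff, h2]
    have hcomm : Commute (geomReflection M i) (geomReflection M j) :=
      commute_reflection _ _ (by rw [simpleCoroot_single, hzero])
        (by rw [simpleCoroot_single, geomCoeff_comm, hzero])
    have hsq (k : B) : geomReflection M k ^ 2 = 1 := by
      rw [pow_two]
      ext1 v
      exact involutive_reflection (simpleCoroot_single_self M k) v
    rw [h2, hcomm.mul_pow, hsq, hsq, one_mul]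
  · refine reflection_mul_reflection_pow_eq_one _ _ h3 ?_
    rw [simpleCoroot_single, simpleCoroot_single, geomCoeff_mul_geomCoeff_sub_two M (by omega)]

theorem geomReflection_injective : Function.Injective (geomReflection M) := by
  intro i j h
  by_contra hij
  have hcoord := DFunLike.congr_fun (LinearEquiv.congr_fun h (Finsupp.single i 1)) i
  simp only [geomReflection, reflection_apply, simpleCoroot_single, geomCoeff_self] at hcoord
  norm_num [Finsupp.single_eq_of_ne hij] at hcoord

variable {M} in
theorem simple_injective : Function.Injective cs.simple := by
  refine Function.Injective.of_comp
    (f := cs.lift ⟨geomReflection M, isLiftable_geomReflection M⟩) fun i j h => ?_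
  rw [Function.comp_apply, Function.comp_apply, cs.lift_apply_simple, cs.lift_apply_simple] at h
  exact geomReflection_injective M h

end GeometricRepresentation

section Exchange

theorem prod_map_alternatingWord_two_mul {N : Type*} [Monoid N] (f : B → N) (i j : B) (m : ℕ) :
    ((alternatingWord i j (2 * m)).map f).prod = (f i * f j) ^ m := by
  induction m with
  | zero => simp [alternatingWord]
  | succ m ih =>
    rw [mul_add_one, alternatingWord_succ', alternatingWord_succ']
    simp [ih, pow_succ', mul_assoc]

theorem wordProd_alternatingWord_two_mul_add_one (i j : B) (m : ℕ) :
    cs.wordProd (alternatingWord i j (2 * m + 1)) =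
      cs.simple j * (cs.simple i * cs.simple j) ^ m := by
  rw [cs.prod_alternatingWord_eq_mul_pow, if_neg (by simp)]
  congr
  omega

theorem getElem_leftInvSeq_alternatingWord_add (i j : B) {k : ℕ} (hk : k < M i j) :
    (cs.leftInvSeq (alternatingWord i j (2 * M i j)))[M i j + k]'(by simp; omega) =
      (cs.leftInvSeq (alternatingWord i j (2 * M i j)))[k]'(by simp; omega) := by
  rw [cs.getElem_leftInvSeq_alternatingWord i j (M i j) (M i j + k) (by omega),
    cs.getElem_leftInvSeq_alternatingWord i j (M i j) k (by omega),
    wordProd_alternatingWord_two_mul_add_one, wordProd_alternatingWord_two_mul_add_one, pow_add,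
    cs.simple_mul_simple_pow', one_mul]

open Classical in
theorem even_count_leftInvSeq_alternatingWord (i j : B) (x : W) :
    Even ((cs.leftInvSeq (alternatingWord i j (2 * M i j))).count x) := by
  set l := cs.leftInvSeq (alternatingWord i j (2 * M i j)) with hl
  have hlen : l.length = 2 * M i j := by simp [hl]
  have hdrop : l.drop (M i j) = l.take (M i j) := by
    refine List.ext_getElem (by simp; omega) fun k hk _ => ?_
    rw [List.length_drop] at hk
    rw [List.getElem_drop, List.getElem_take]
    exact getElem_leftInvSeq_alternatingWord_add cs i j (by omega)
  rw [← l.take_append_drop (M i j), List.count_append, hdrop]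
  exact Even.add_self _

open Classical in
/-- The involution by which the generator `i` acts on signed reflections, written additively
and extended to all of `W × ZMod 2`: conjugation by `s_i`, changing the sign at `s_i` only. -/
noncomputable def signedConj (i : B) : Function.End (W × ZMod 2) := fun p =>
  (cs.simple i * p.1 * cs.simple i, p.2 + if p.1 = cs.simple i then 1 else 0)

open Classical in
theorem prod_map_signedConj_apply (ω : List B) (x : W) (e : ZMod 2) :
    (ω.map (signedConj cs)).prod (x, e) =
      (MulAut.conj (cs.wordProd ω) x,
        e + (cs.leftInvSeq ω).count (MulAut.conj (cs.wordProd ω) x)) := by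
  induction ω with
  | nil => simp [Function.End.one_def]
  | cons i ω ih =>
    set y := MulAut.conj (cs.wordProd ω) x
    have hconj : MulAut.conj (cs.wordProd (i :: ω)) x = MulAut.conj (cs.simple i) y := by
      rw [cs.wordProd_cons, map_mul, MulAut.mul_apply]
    have hfix : cs.simple i = cs.simple i * y * cs.simple i ↔ y = cs.simple i := by
      rw [← (MulAut.conj (cs.simple i)).injective.eq_iff (a := y)]
      simp [eq_comm]
    rw [List.map_cons, List.prod_cons]
    change signedConj cs i ((ω.map (signedConj cs)).prod (x, e)) = _
    rw [ih, hconj, leftInvSeq, List.count_cons,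
      List.count_map_of_injective _ _ (MulAut.conj (cs.simple i)).injective]
    simp only [signedConj, beq_iff_eq, MulAut.conj_apply, cs.inv_simple, hfix]
    push_cast
    rw [add_assoc]

theorem isLiftable_signedConj : M.IsLiftable (signedConj cs) := by
  classical
  intro i j
  funext ⟨x, e⟩
  rw [← prod_map_alternatingWord_two_mul, prod_map_signedConj_apply,
    cs.prod_alternatingWord_eq_mul_pow,
    (ZMod.natCast_eq_zero_iff_even).mpr (even_count_leftInvSeq_alternatingWord cs i j _)]
  simp [Function.End.one_def]

open Classical in
theorem count_leftInvSeq_eq_of_wordProd_eq {ω ω' : List B}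
    (h : cs.wordProd ω = cs.wordProd ω') (x : W) :
    ((cs.leftInvSeq ω).count x : ZMod 2) = (cs.leftInvSeq ω').count x := by
  have hlift (τ : List B) : cs.lift ⟨signedConj cs, isLiftable_signedConj cs⟩ (cs.wordProd τ) =
      (τ.map (signedConj cs)).prod := by
    rw [wordProd, map_list_prod, List.map_map]
    congr 2
    exact funext (cs.lift_apply_simple _)
  have hprod := (hlift ω).symm.trans ((congrArg _ h).trans (hlift ω'))
  have hsnd := congrArg Prod.snd (congrFun hprod ((MulAut.conj (cs.wordProd ω)).symm x, 0))
  simpa only [prod_map_signedConj_apply, ← h, MulEquiv.apply_symm_apply, zero_add] using hsnd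

theorem mem_leftInvSeq_of_isLeftDescent {ω : List B} {i : B}
    (h : cs.IsLeftDescent (cs.wordProd ω) i) : cs.simple i ∈ cs.leftInvSeq ω := by
  classical
  obtain ⟨τ, hτ, hprod⟩ := cs.exists_isReduced (cs.simple i * cs.wordProd ω)
  have hτω : cs.wordProd (i :: τ) = cs.wordProd ω := by simp [cs.wordProd_cons, ← hprod]
  have hred : cs.IsReduced (i :: τ) := by
    rw [CoxeterSystem.IsReduced, hτω, List.length_cons, ← hτ.eq, ← hprod, cs.isLeftDescent_iff.mp h]
  have hcount : (cs.leftInvSeq (i :: τ)).count (cs.simple i) = 1 :=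
    List.count_eq_one_of_mem hred.nodup_leftInvSeq (by simp [leftInvSeq])
  by_contra hmem
  have hparity := count_leftInvSeq_eq_of_wordProd_eq cs hτω (cs.simple i)
  rw [hcount, List.count_eq_zero_of_not_mem hmem] at hparity
  simp at hparity

theorem exists_eraseIdx_of_isLeftDescent {ω : List B} {i : B}
    (h : cs.IsLeftDescent (cs.wordProd ω) i) :
    ∃ k < ω.length, cs.simple i * cs.wordProd ω = cs.wordProd (ω.eraseIdx k) := by
  obtain ⟨k, hk, hs⟩ := List.mem_iff_getElem.mp (mem_leftInvSeq_of_isLeftDescent cs h)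
  refine ⟨k, by simpa using hk, ?_⟩
  rw [← cs.getD_leftInvSeq_mul_wordProd, List.getD_eq_getElem _ _ hk, hs]

theorem length_wordProd_eraseIdx_lt {ω : List B} {k : ℕ} (hk : k < ω.length) :
    cs.length (cs.wordProd (ω.eraseIdx k)) < ω.length := by
  have hle := cs.length_wordProd_le (ω.eraseIdx k)
  rw [List.length_eraseIdx_of_lt hk] at hle
  omega

theorem simple_mul_eq_mul_simple_of_isLeftDescent_mul_simple {w : W} {i j : B}
    (hi : ¬ cs.IsLeftDescent w i) (h : cs.IsLeftDescent (w * cs.simple j) i) :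
    cs.simple i * w = w * cs.simple j := by
  obtain ⟨ω, hω, rfl⟩ := cs.exists_isReduced w
  have hconcat : cs.wordProd ω * cs.simple j = cs.wordProd (ω ++ [j]) := by simp [wordProd_append]
  rw [hconcat] at h
  obtain ⟨k, hk, hprod⟩ := exists_eraseIdx_of_isLeftDescent cs h
  rw [← hconcat, ← mul_assoc] at hprod
  obtain hkω | hkω := lt_or_ge k ω.length
  · rw [List.eraseIdx_append_of_lt_length hkω, wordProd_append, wordProd_singleton,
      mul_left_inj] at hprod
    refine absurd ?_ hi
    rw [IsLeftDescent, hprod, hω.eq]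
    exact length_wordProd_eraseIdx_lt cs hkω
  · have hk_sub : k - ω.length = 0 := by
      rw [List.length_append, List.length_singleton] at hk
      omega
    rw [List.eraseIdx_append_of_length_le hkω, hk_sub, List.eraseIdx_cons_zero,
      List.append_nil] at hprod
    exact eq_mul_of_mul_inv_eq (by rwa [cs.inv_simple])

theorem isLeftDescent_simple_mul_of_ne {w : W} {i j : B} (hij : i ≠ j)
    (hi : cs.IsLeftDescent w i) (hj : cs.IsLeftDescent w j) :
    cs.IsLeftDescent (cs.simple i * w) j := by
  obtain ⟨ω, hω, hprod⟩ := cs.exists_isReduced (cs.simple j * w)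
  have hw : w = cs.wordProd (j :: ω) := by simp [wordProd_cons, ← hprod]
  have hlen := cs.isLeftDescent_iff.mp hj
  rw [hprod, hω.eq] at hlen
  have hi' := cs.isLeftDescent_iff.mp hi
  rw [hw] at hi
  obtain ⟨_ | k, hk, hexch⟩ := exists_eraseIdx_of_isLeftDescent cs hi
  · rw [List.eraseIdx_cons_zero, ← hw, ← hprod, mul_left_inj] at hexch
    exact absurd (simple_injective cs hexch) hij
  · rw [List.eraseIdx_cons_succ, ← hw, wordProd_cons] at hexch
    rw [IsLeftDescent, hexch, cs.simple_mul_simple_cancel_left, ← hexch]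
    have := length_wordProd_eraseIdx_lt cs (Nat.lt_of_succ_lt_succ hk)
    omega

theorem isRightDescent_of_isRightDescent_simple_mul {x : W} {i j k : B}
    (hj : cs.IsLeftDescent x j) (hij : ¬ cs.IsLeftDescent (cs.simple i * x) j)
    (hk : cs.IsRightDescent (cs.simple i * x) k) : cs.IsRightDescent x k := by
  by_contra hxk
  rw [← cs.isLeftDescent_inv_iff] at hxk
  rw [← cs.isLeftDescent_inv_iff, mul_inv_rev, cs.inv_simple] at hk
  have hcomm : x * cs.simple k = cs.simple i * x := by
    simpa using
      congrArg (·⁻¹) (simple_mul_eq_mul_simple_of_isLeftDescent_mul_simple cs hxk hk)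
  apply hij
  rw [cs.isLeftDescent_inv_iff, cs.not_isRightDescent_iff] at hxk
  have hle := cs.length_mul_le (cs.simple j * x) (cs.simple k)
  rw [cs.length_simple, cs.isLeftDescent_iff.mp hj, mul_assoc, hcomm] at hle
  rw [IsLeftDescent, ← hcomm, hxk, hcomm]
  omega

theorem commute_simple_of_eq_two {i j : B} (h : M i j = 2) :
    Commute (cs.simple i) (cs.simple j) := by
  have hpow := cs.simple_mul_simple_pow i j
  rwa [h, pow_two, mul_eq_one_iff_eq_inv, mul_inv_rev, cs.inv_simple, cs.inv_simple] at hpow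

theorem mem_of_isLeftDescent_wordProd {l : List B}
    (hl : ∀ u ∈ l, ∀ v ∈ l, Commute (cs.simple u) (cs.simple v)) {i : B}
    (hi : cs.IsLeftDescent (cs.wordProd l) i) : i ∈ l := by
  obtain ⟨k, hk, hs⟩ := List.mem_iff_getElem.mp (mem_leftInvSeq_of_isLeftDescent cs hi)
  rw [cs.length_leftInvSeq] at hk
  have hcomm : Commute (cs.wordProd (l.take k)) (cs.simple l[k]) := by
    refine (Commute.list_prod_right _ _ fun a ha => ?_).symm
    obtain ⟨u, hu, rfl⟩ := List.mem_map.mp ha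
    exact hl _ (List.getElem_mem hk) u (List.mem_of_mem_take hu)
  rw [cs.getElem_leftInvSeq l k hk, hcomm.eq, mul_inv_cancel_right] at hs
  rw [← simple_injective cs hs]
  exact List.getElem_mem hk

end Exchange

section ReducedFactor

variable {cs} {s t : B} {x y z : W}

variable (cs) in
/-- `x` is the middle factor of a reduced factorization `y = a * x * b`. -/
def IsReducedFactor (x y : W) : Prop :=
  ∃ a b : W, y = a * x * b ∧ cs.length y = cs.length a + cs.length x + cs.length b

theorem IsReducedFactor.refl (x : W) : IsReducedFactor cs x x :=
  ⟨1, 1, by simp, by simp⟩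

theorem IsReducedFactor.trans (hxy : IsReducedFactor cs x y) (hyz : IsReducedFactor cs y z) :
    IsReducedFactor cs x z := by
  obtain ⟨a, b, rfl, hy⟩ := hxy
  obtain ⟨c, d, rfl, hz⟩ := hyz
  have hassoc : c * (a * x * b) * d = c * a * x * (b * d) := by simp only [mul_assoc]
  rw [hassoc] at hz ⊢
  refine ⟨c * a, b * d, rfl, ?_⟩
  have h₁ := cs.length_mul_le c a
  have h₂ := cs.length_mul_le b d
  have h₃ := cs.length_mul_le (c * a * x) (b * d)
  have h₄ := cs.length_mul_le (c * a) x
  omega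

theorem IsReducedFactor.inv (h : IsReducedFactor cs x y) : IsReducedFactor cs x⁻¹ y⁻¹ := by
  obtain ⟨a, b, rfl, hlen⟩ := h
  refine ⟨b⁻¹, a⁻¹, by simp [mul_assoc], ?_⟩
  simp only [cs.length_inv]
  omega

theorem LeftStarReducible.exists_eq_simple_mul (h : LeftStarReducible cs s t y x) :
    ∃ a b : B, Noncomm M a b ∧ cs.IsLeftDescent y a ∧ ¬ cs.IsLeftDescent y b ∧
      x = cs.simple a * y ∧ cs.IsLeftDescent x b := by
  obtain ⟨hst, h | h⟩ := h
  · exact ⟨s, t, hst, h⟩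
  · rw [Noncomm, M.symmetric] at hst
    exact ⟨t, s, hst, h⟩

theorem RightStarReducible.inv (h : RightStarReducible cs s t y x) :
    LeftStarReducible cs s t y⁻¹ x⁻¹ := by
  refine ⟨h.1, ?_⟩
  simpa only [cs.isLeftDescent_inv_iff, ← inv_inj (a := x), mul_inv_rev, cs.inv_simple] using h.2

theorem LeftStarReducible.isReducedFactor (h : LeftStarReducible cs s t y x) :
    IsReducedFactor cs x y := by
  obtain ⟨a, b, -, ha, -, rfl, -⟩ := h.exists_eq_simple_mul
  refine ⟨cs.simple a, 1, by simp, ?_⟩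
  rw [cs.length_simple, cs.length_one, ← cs.isLeftDescent_iff.mp ha]
  omega

theorem RightStarReducible.isReducedFactor (h : RightStarReducible cs s t y x) :
    IsReducedFactor cs x y := by
  simpa only [inv_inv] using h.inv.isReducedFactor.inv

theorem StarReducible.isReducedFactor (h : StarReducible cs y x) : IsReducedFactor cs x y := by
  induction h using Relation.ReflTransGen.head_induction_on with
  | refl => exact .refl x
  | head hstep _ ih =>
    obtain ⟨s, t, hleft | hright⟩ := hstep
    · exact ih.trans hleft.isReducedFactor
    · exact ih.trans hright.isReducedFactor

theorem IsReducedFactor.length_le_nval (h : IsReducedFactor cs x y) (hx : IsCommProd cs x) :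
    cs.length x ≤ nval cs y := by
  obtain ⟨a, b, hy, hlen⟩ := h
  refine le_csSup ⟨cs.length y, ?_⟩ ⟨a, x, b, hy, hlen, hx, rfl⟩
  rintro k ⟨_, _, _, -, hlen', -, rfl⟩
  omega

end ReducedFactor

section ChainEnds

variable {cs} {ε : B → Bool} {n : ℕ} {x y w : W} {T U : Multiset B}

variable (cs) in
/-- `T` and `U` are candidates for the left and right ends of `n` chains that partition the letters
of `y`, consecutive letters of a chain having different colours: they contain the descents of `y`,
and the number of ends of colour `false` has the parity that such a partition imposes. -/
structure ChainEnds (ε : B → Bool) (n : ℕ) (y : W) (T U : Multiset B) : Prop where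
  card_left : T.card = n
  card_right : U.card = n
  mem_left : ∀ i, cs.IsLeftDescent y i → i ∈ T
  mem_right : ∀ i, cs.IsRightDescent y i → i ∈ U
  even : Even (cs.length y + n + (T.countP (ε · = false) + U.countP (ε · = false)))

theorem ChainEnds.inv (h : ChainEnds cs ε n y T U) : ChainEnds cs ε n y⁻¹ U T where
  card_left := h.card_right
  card_right := h.card_left
  mem_left := by simpa only [cs.isLeftDescent_inv_iff] using h.mem_right
  mem_right := by simpa only [cs.isRightDescent_inv_iff] using h.mem_left
  even := by
    rw [cs.length_inv, add_comm (U.countP _)]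
    exact h.even

theorem chainEnds_wordProd {l : List B} (hred : cs.IsReduced l)
    (hl : ∀ u ∈ l, ∀ v ∈ l, Commute (cs.simple u) (cs.simple v)) :
    ChainEnds cs ε l.length (cs.wordProd l) l l where
  card_left := rfl
  card_right := rfl
  mem_left _ hi := mem_of_isLeftDescent_wordProd cs hl hi
  mem_right i hi := by
    rw [← cs.isLeftDescent_inv_iff, ← cs.wordProd_reverse] at hi
    exact List.mem_reverse.mp (mem_of_isLeftDescent_wordProd cs (by simpa using hl) hi)
  even := by
    rw [hred.eq]
    exact (Even.add_self _).add (Even.add_self _)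

theorem ChainEnds.simple_mul (hε : ∀ s t, Noncomm M s t → ε s ≠ ε t) {s t : B}
    (hst : Noncomm M s t) (hs : ¬ cs.IsLeftDescent x s) (htx : cs.IsLeftDescent x t)
    (ht : ¬ cs.IsLeftDescent (cs.simple s * x) t) (h : ChainEnds cs ε n x (t ::ₘ T) U) :
    ChainEnds cs ε n (cs.simple s * x) (s ::ₘ T) U where
  card_left := by simpa using h.card_left
  card_right := h.card_right
  mem_left i hi := by
    obtain rfl | his := eq_or_ne i s
    · exact Multiset.mem_cons_self i T
    have hs' : cs.IsLeftDescent (cs.simple s * x) s := by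
      rwa [cs.isLeftDescent_iff_not_isLeftDescent_mul, cs.simple_mul_simple_cancel_left]
    have hix : cs.IsLeftDescent x i := by
      simpa using isLeftDescent_simple_mul_of_ne cs his.symm hs' hi
    have hit : i ≠ t := by
      rintro rfl
      exact ht hi
    exact Multiset.mem_cons_of_mem
      ((Multiset.mem_cons.mp (h.mem_left i hix)).resolve_left hit)
  mem_right i hi := h.mem_right i (isRightDescent_of_isRightDescent_simple_mul cs htx ht hi)
  even := by
    have hcolour : (if ε s = false then 1 else 0) + (if ε t = false then 1 else 0) = 1 := by
      have := hε s t hst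
      cases hεs : ε s <;> cases hεt : ε t <;> simp_all
    have heven := h.even
    rw [Multiset.countP_cons] at heven ⊢
    rw [cs.not_isLeftDescent_iff.mp hs]
    rw [Nat.even_iff] at heven ⊢
    omega

theorem ChainEnds.exists_of_leftStarReducible (hε : ∀ s t, Noncomm M s t → ε s ≠ ε t) {s t : B}
    (h : LeftStarReducible cs s t y x) (hx : ChainEnds cs ε n x T U) :
    ∃ T', ChainEnds cs ε n y T' U := by
  obtain ⟨a, b, hab, ha, hb, rfl, hbx⟩ := h.exists_eq_simple_mul
  obtain ⟨T, rfl⟩ := Multiset.exists_cons_of_mem (hx.mem_left b hbx)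
  refine ⟨a ::ₘ T, ?_⟩
  rw [← cs.simple_mul_simple_cancel_left (w := y) a] at hb ⊢
  exact hx.simple_mul hε hab (cs.isLeftDescent_iff_not_isLeftDescent_mul.mp ha) hbx hb

theorem ChainEnds.exists_of_starReducible (hε : ∀ s t, Noncomm M s t → ε s ≠ ε t)
    (h : StarReducible cs y x) (hx : ChainEnds cs ε n x T U) :
    ∃ T' U', ChainEnds cs ε n y T' U' := by
  induction h using Relation.ReflTransGen.head_induction_on with
  | refl => exact ⟨T, U, hx⟩
  | head hstep _ ih =>
    obtain ⟨T', U', hends⟩ := ih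
    obtain ⟨s, t, hleft | hright⟩ := hstep
    · obtain ⟨T'', hT''⟩ := hends.exists_of_leftStarReducible hε hleft
      exact ⟨T'', U', hT''⟩
    · obtain ⟨U'', hU''⟩ := hends.inv.exists_of_leftStarReducible hε hright.inv
      exact ⟨T', U'', by simpa only [inv_inv] using hU''.inv⟩

theorem exists_finset_val_eq_of_card_le_ncard {α : Type*} {T : Multiset α} {s : Set α}
    (hs : ∀ a ∈ s, a ∈ T) (hcard : T.card ≤ s.ncard) :
    ∃ F : Finset α, F.val = T ∧ (F : Set α) = s := by
  classical
  have hsub : s ⊆ (T.toFinset : Set α) := fun a ha => by simpa using hs a ha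
  have hs_le := Set.ncard_le_ncard hsub T.toFinset.finite_toSet
  rw [Set.ncard_coe_finset] at hs_le
  have hT : T.Nodup := Multiset.toFinset_card_eq_card_iff_nodup.mp
    (T.toFinset_card_le.antisymm (hcard.trans hs_le))
  refine ⟨T.toFinset, by rw [Multiset.toFinset_val, hT.dedup], ?_⟩
  refine (Set.eq_of_subset_of_ncard_le hsub ?_ T.toFinset.finite_toSet).symm
  rw [Set.ncard_coe_finset]
  exact T.toFinset_card_le.trans hcard

theorem kSet_coe_finset (ε : B → Bool) (F : Finset B) :
    kSet ε F = (-1) ^ F.val.countP (ε · = false) := by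
  have hfilter : (F : Set B) ∩ {i | ε i = false} = (F.filter (ε · = false) : Finset B) := by
    ext i
    simp
  rw [kSet, hfilter, Set.ncard_coe_finset, Multiset.countP_eq_card_filter]
  rfl

theorem ChainEnds.ncard_leftDescents_le (h : ChainEnds cs ε n w T U) :
    (leftDescents cs w).ncard ≤ n := by
  classical
  have hsub : leftDescents cs w ⊆ (T.toFinset : Set B) := fun i hi => by
    simpa using h.mem_left i hi
  have hle := Set.ncard_le_ncard hsub T.toFinset.finite_toSet
  rw [Set.ncard_coe_finset] at hle
  exact hle.trans (T.toFinset_card_le.trans_eq h.card_left)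

theorem ChainEnds.kElt_eq (h : ChainEnds cs ε n w T U)
    (hL : n ≤ (leftDescents cs w).ncard) (hR : n ≤ (rightDescents cs w).ncard) :
    kElt cs ε w = (-1) ^ (cs.length w + n) := by
  obtain ⟨F, rfl, hF⟩ := exists_finset_val_eq_of_card_le_ncard (s := leftDescents cs w)
    h.mem_left (h.card_left.trans_le hL)
  obtain ⟨G, rfl, hG⟩ := exists_finset_val_eq_of_card_le_ncard (s := rightDescents cs w)
    h.mem_right (h.card_right.trans_le hR)
  rw [kElt, ← hF, ← hG, kSet_coe_finset, kSet_coe_finset, ← pow_add]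
  exact neg_one_pow_congr (Nat.even_add.mp h.even).symm

theorem kElt_eq_neg_one_pow (hε : ∀ s t, Noncomm M s t → ε s ≠ ε t)
    (hwx : StarReducible cs w x) (hx : IsCommProd cs x)
    (hL : nval cs w ≤ (leftDescents cs w).ncard) (hR : nval cs w ≤ (rightDescents cs w).ncard) :
    kElt cs ε w = (-1) ^ (cs.length w + nval cs w) := by
  have hx_le := hwx.isReducedFactor.length_le_nval hx
  obtain ⟨l, -, hl, hred, rfl⟩ := hx
  have hcomm : ∀ u ∈ l, ∀ v ∈ l, Commute (cs.simple u) (cs.simple v) := fun u hu v hv => by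
    obtain rfl | huv := eq_or_ne u v
    · exact .refl _
    · exact commute_simple_of_eq_two cs (hl u hu v hv huv)
  obtain ⟨T, U, h⟩ := (chainEnds_wordProd hred hcomm).exists_of_starReducible hε hwx
  rw [hred.eq] at hx_le
  rw [← (hL.trans h.ncard_leftDescents_le).antisymm' hx_le]
  exact h.kElt_eq (hx_le.trans hL) (hx_le.trans hR)

theorem kElt_eq_one (ε : B → Bool) (h : leftDescents cs w = rightDescents cs w) :
    kElt cs ε w = 1 := by
  rw [kElt, h, kSet, ← mul_pow]
  norm_num

end ChainEnds

variable {cs} in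
theorem statement11_general (hbip : ∃ ε : B → Bool, ∀ s t : B, Noncomm M s t → ε s ≠ ε t)
    {w : W} (hw : ∃ x : W, StarReducible cs w x ∧ IsCommProd cs x)
    (hLR : leftDescents cs w = rightDescents cs w)
    (hcard : (leftDescents cs w).ncard = nval cs w) :
    cs.length w ≡ nval cs w [MOD 2] := by
  obtain ⟨ε, hε⟩ := hbip
  obtain ⟨x, hwx, hx⟩ := hw
  have hk : (-1 : ℤ) ^ (cs.length w + nval cs w) = 1 := by
    rw [← kElt_eq_neg_one_pow hε hwx hx hcard.ge (hLR ▸ hcard.ge), kElt_eq_one ε hLR]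
  have heven := (neg_one_pow_eq_one_iff_even (by norm_num)).mp hk
  rw [Nat.even_iff] at heven
  rw [Nat.ModEq]
  omega

/-- Lemma 7.7: suppose the Coxeter graph is bipartite and `W` has Property F.  If
`w ∈ W_c` satisfies `𝓛(w) = 𝓡(w)` and `|𝓛(w)| = n(w)`, then `ℓ(w) ≡ n(w) (mod 2)`. -/
theorem statement11 (hbip : ∃ ε : B → Bool, ∀ s t : B, Noncomm M s t → ε s ≠ ε t)
    (hF : PropertyF cs) (w : W) (hw : FullyComm cs w)
    (hLR : leftDescents cs w = rightDescents cs w)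
    (hcard : (leftDescents cs w).ncard = nval cs w) :
    cs.length w ≡ nval cs w [MOD 2] :=
  statement11_general hbip (hF w hw) hLR hcard
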